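/- arXiv:1011.0305 — 2 statements merged into one kernel-verified Lean document; each statement's English description precedes it below -/
import Mathlib

section
/- Let f be an irreducible homogeneous polynomial of even degree in k[x₀,x₁,x₂], and let F ∈ S be homogeneous with θ(F) = f. If G ∈ S is homogeneous and θ(G) lies in the ideal (f) of k[x₀,x₁,x₂], then G lies in the ideal of S generated by F and the six minors Δ_{ij}, 0 ≤ i ≤ j ≤ 2. -/
open MvPolynomial

noncomputable def theta (k : Type*) [CommRing k] :
    MvPolynomial (Fin 6) k →ₐ[k] MvPolynomial (Fin 3) k :=
  MvPolynomial.aeval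
    ![X 0 * X 0, X 0 * X 1, X 0 * X 2, X 1 * X 1, X 1 * X 2, X 2 * X 2]

noncomputable def Delta (k : Type*) [CommRing k] : Fin 6 → MvPolynomial (Fin 6) k :=
  ![X 3 * X 5 - X 4 * X 4,
    X 1 * X 5 - X 4 * X 2,
    X 1 * X 4 - X 2 * X 3,
    X 0 * X 5 - X 2 * X 2,
    X 0 * X 4 - X 2 * X 1,
    X 0 * X 3 - X 1 * X 1]

/-- Square-free residue attached to a parity vector. -/
noncomputable def resid {R : Type*} [CommRing R] (y : Fin 6 → R) (p q r : ℕ) : R :=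
  if p = 0 then
    if q = 0 then (if r = 0 then 1 else 0) else (if r = 0 then 0 else y 4)
  else
    if q = 0 then (if r = 0 then 0 else y 2) else (if r = 0 then y 1 else 0)

/-- Normal form monomial with exponent `(a, b, c)`; zero if `a + b + c` is odd. -/
noncomputable def nform {R : Type*} [CommRing R] (y : Fin 6 → R) (a b c : ℕ) : R :=
  y 0 ^ (a / 2) * y 3 ^ (b / 2) * y 5 ^ (c / 2) * resid y (a % 2) (b % 2) (c % 2)

lemma nform_step {R : Type*} [CommRing R] (y : Fin 6 → R)
    (h0 : y 3 * y 5 = y 4 * y 4) (h1 : y 1 * y 5 = y 4 * y 2) (h2 : y 1 * y 4 = y 2 * y 3)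
    (h3 : y 0 * y 5 = y 2 * y 2) (h4 : y 0 * y 4 = y 2 * y 1) (h5 : y 0 * y 3 = y 1 * y 1)
    (a b c : ℕ) :
    nform y (a + 2) b c = y 0 * nform y a b c ∧
    nform y (a + 1) (b + 1) c = y 1 * nform y a b c ∧
    nform y (a + 1) b (c + 1) = y 2 * nform y a b c ∧
    nform y a (b + 2) c = y 3 * nform y a b c ∧
    nform y a (b + 1) (c + 1) = y 4 * nform y a b c ∧
    nform y a b (c + 2) = y 5 * nform y a b c := by
  have key : ∀ n : ℕ, ∃ d, n = 2 * d ∨ n = 2 * d + 1 := fun n => ⟨n / 2, by omega⟩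
  have e0 : ∀ d : ℕ, (2 * d) / 2 = d := fun d => by omega
  have e1 : ∀ d : ℕ, (2 * d + 1) / 2 = d := fun d => by omega
  have e2 : ∀ d : ℕ, (2 * d + 2) / 2 = d + 1 := fun d => by omega
  have e3 : ∀ d : ℕ, (2 * d + 3) / 2 = d + 1 := fun d => by omega
  have f0 : ∀ d : ℕ, (2 * d) % 2 = 0 := fun d => by omega
  have f1 : ∀ d : ℕ, (2 * d + 1) % 2 = 1 := fun d => by omega
  have f2 : ∀ d : ℕ, (2 * d + 2) % 2 = 0 := fun d => by omega
  have f3 : ∀ d : ℕ, (2 * d + 3) % 2 = 1 := fun d => by omega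
  obtain ⟨u, rfl | rfl⟩ := key a <;> obtain ⟨v, rfl | rfl⟩ := key b <;>
  obtain ⟨w, rfl | rfl⟩ := key c <;>
  refine ⟨?_, ?_, ?_, ?_, ?_, ?_⟩ <;>
  simp only [nform, resid, add_assoc, Nat.reduceAdd, e0, e1, e2, e3, f0, f1, f2, f3, if_true,
    one_ne_zero, if_false] <;>
  first
  | ring1
  | linear_combination (y 0 ^ u * y 3 ^ v * y 5 ^ w) * h0
  | linear_combination (y 0 ^ u * y 3 ^ v * y 5 ^ w) * h1
  | linear_combination (y 0 ^ u * y 3 ^ v * y 5 ^ w) * h2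
  | linear_combination (-(y 0 ^ u * y 3 ^ v * y 5 ^ w)) * h2
  | linear_combination (y 0 ^ u * y 3 ^ v * y 5 ^ w) * h3
  | linear_combination (y 0 ^ u * y 3 ^ v * y 5 ^ w) * h4
  | linear_combination (y 0 ^ u * y 3 ^ v * y 5 ^ w) * h5

/-- The linear section modulo the minors. -/
noncomputable def sect {k R : Type*} [Field k] [CommRing R] [Algebra k R] (y : Fin 6 → R) :
    MvPolynomial (Fin 3) k →ₗ[k] R :=
  (basisMonomials (Fin 3) k).constr k (fun a => nform y (a 0) (a 1) (a 2))

lemma sect_monomial {k R : Type*} [Field k] [CommRing R] [Algebra k R] (y : Fin 6 → R)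
    (a : Fin 3 →₀ ℕ) : sect (k := k) y (monomial a 1) = nform y (a 0) (a 1) (a 2) := by
  have := (basisMonomials (Fin 3) k).constr_basis k (fun a => nform y (a 0) (a 1) (a 2)) a
  simpa [sect] using this

lemma sect_step {k R : Type*} [Field k] [CommRing R] [Algebra k R] (y : Fin 6 → R)
    (h0 : y 3 * y 5 = y 4 * y 4) (h1 : y 1 * y 5 = y 4 * y 2) (h2 : y 1 * y 4 = y 2 * y 3)
    (h3 : y 0 * y 5 = y 2 * y 2) (h4 : y 0 * y 4 = y 2 * y 1) (h5 : y 0 * y 3 = y 1 * y 1)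
    (i : Fin 6) (h : MvPolynomial (Fin 3) k) :
    sect y (theta k (X i) * h) = y i * sect y h := by
  suffices H : sect y ∘ₗ LinearMap.mulLeft k (theta k (X i)) =
      LinearMap.mulLeft k (y i) ∘ₗ sect (k := k) y from LinearMap.congr_fun H h
  refine (basisMonomials (Fin 3) k).ext fun a => ?_
  obtain ⟨s0, s1, s2, s3, s4, s5⟩ := nform_step y h0 h1 h2 h3 h4 h5 (a 0) (a 1) (a 2)
  simp only [coe_basisMonomials, LinearMap.comp_apply, LinearMap.mulLeft_apply, sect_monomial,
    theta, aeval_X]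
  fin_cases i <;> simp [X, monomial_mul, sect_monomial] <;>
    first
    | (rw [← s0]; congr 1 <;> omega)
    | (rw [← s1]; congr 1 <;> omega)
    | (rw [← s2]; congr 1 <;> omega)
    | (rw [← s3]; congr 1 <;> omega)
    | (rw [← s4]; congr 1 <;> omega)
    | (rw [← s5]; congr 1 <;> omega)

lemma sect_mul {k R : Type*} [Field k] [CommRing R] [Algebra k R] (y : Fin 6 → R)
    (h0 : y 3 * y 5 = y 4 * y 4) (h1 : y 1 * y 5 = y 4 * y 2) (h2 : y 1 * y 4 = y 2 * y 3)
    (h3 : y 0 * y 5 = y 2 * y 2) (h4 : y 0 * y 4 = y 2 * y 1) (h5 : y 0 * y 3 = y 1 * y 1)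
    (p : MvPolynomial (Fin 6) k) : ∀ h : MvPolynomial (Fin 3) k,
    sect y (theta k p * h) = aeval y p * sect y h := by
  induction p using MvPolynomial.induction_on with
  | C c =>
    intro h
    rw [← algebraMap_eq, AlgHom.commutes, AlgHom.commutes, ← Algebra.smul_def, map_smul,
      Algebra.smul_def]
  | add p q hp hq => intro h; simp only [map_add, add_mul, hp, hq]
  | mul_X p i hp =>
    intro h
    rw [map_mul (theta k), mul_assoc, hp, sect_step y h0 h1 h2 h3 h4 h5, map_mul (aeval y), aeval_X, mul_assoc]

theorem mem_span_F_minors (k : Type*) [Field k] [IsAlgClosed k]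
    (f : MvPolynomial (Fin 3) k) (m : ℕ) (hfirr : Irreducible f)
    (hf : f.IsHomogeneous (2 * m))
    (F : MvPolynomial (Fin 6) k) (n : ℕ) (hF : F.IsHomogeneous n)
    (hθF : theta k F = f)
    (G : MvPolynomial (Fin 6) k) (n' : ℕ) (hG : G.IsHomogeneous n')
    (hθG : theta k G ∈ Ideal.span {f}) :
    G ∈ Ideal.span (insert F (Set.range (Delta k))) := by
  obtain ⟨h, hh⟩ := Ideal.mem_span_singleton'.mp hθG
  set J := Ideal.span (insert F (Set.range (Delta k))) with hJ
  let y : Fin 6 → (MvPolynomial (Fin 6) k ⧸ J) := fun i => Ideal.Quotient.mk J (X i)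
  have hD : ∀ j, Ideal.Quotient.mk J (Delta k j) = 0 := fun j =>
    Ideal.Quotient.eq_zero_iff_mem.mpr (Ideal.subset_span (Or.inr ⟨j, rfl⟩))
  have hy : ∀ p : MvPolynomial (Fin 6) k, aeval y p = Ideal.Quotient.mk J p := by
    intro p
    have : aeval y = Ideal.Quotient.mkₐ k J := by
      ext i; simp [y]
    rw [this]; rfl
  have hmul := sect_mul (k := k) y
    (by simpa [Delta, sub_eq_zero] using hD 0) (by simpa [Delta, sub_eq_zero] using hD 1)
    (by simpa [Delta, sub_eq_zero] using hD 2) (by simpa [Delta, sub_eq_zero] using hD 3)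
    (by simpa [Delta, sub_eq_zero] using hD 4) (by simpa [Delta, sub_eq_zero] using hD 5)
  have hone : sect (k := k) y 1 = 1 := by
    have := sect_monomial (k := k) y 0
    simpa [nform, resid] using this
  have hFz : Ideal.Quotient.mk J F = 0 :=
    Ideal.Quotient.eq_zero_iff_mem.mpr (Ideal.subset_span (Or.inl rfl))
  have e1 := hmul G 1
  rw [mul_one, hone, mul_one, ← hh, ← hθF, mul_comm, hmul, hy, hy, hFz, zero_mul] at e1
  exact Ideal.Quotient.eq_zero_iff_mem.mp e1.symm
end

section
/- For the homogeneous ideal I_C of the image in P⁵ of a smooth plane curve of even degree d = 2m under the Veronese embedding, I_C is generated by the six quadrics Δ_{ij} together with one form F of degree m; in particular I_C = (Δ₀₀, Δ₀₁, Δ₀₂, Δ₁₁, Δ₁₂, Δ₂₂, F) where θ(F) = f. -/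
open MvPolynomial

/-- The ideal generated by the minors. -/
noncomputable def DI (k : Type*) [Field k] : Ideal (MvPolynomial (Fin 6) k) :=
  Ideal.span (Set.range (Delta k))

/-- Class of a variable in the quotient. -/
noncomputable def qx (k : Type*) [Field k] (i : Fin 6) : MvPolynomial (Fin 6) k ⧸ DI k :=
  Ideal.Quotient.mk (DI k) (X i)

/-- Normal form of the monomial `x₀ᵃ x₁ᵇ x₂ᶜ` in the quotient (zero in odd degree). -/
noncomputable def nf (k : Type*) [Field k] (a b c : ℕ) : MvPolynomial (Fin 6) k ⧸ DI k :=
  qx k 0 ^ (a / 2) * qx k 3 ^ (b / 2) * qx k 5 ^ (c / 2) *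
    (if a % 2 = 0 then
      (if b % 2 = 0 then (if c % 2 = 0 then 1 else 0) else (if c % 2 = 0 then 0 else qx k 4))
    else
      (if b % 2 = 0 then (if c % 2 = 0 then 0 else qx k 2) else (if c % 2 = 0 then qx k 1 else 0)))

lemma delta_rel (k : Type*) [Field k] (i : Fin 6) : Ideal.Quotient.mk (DI k) (Delta k i) = 0 :=
  Ideal.Quotient.eq_zero_iff_mem.2 (Ideal.subset_span ⟨i, rfl⟩)

lemma rels (k : Type*) [Field k] :
    qx k 3 * qx k 5 - qx k 4 * qx k 4 = 0 ∧ qx k 1 * qx k 5 - qx k 4 * qx k 2 = 0 ∧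
    qx k 1 * qx k 4 - qx k 2 * qx k 3 = 0 ∧ qx k 0 * qx k 5 - qx k 2 * qx k 2 = 0 ∧
    qx k 0 * qx k 4 - qx k 2 * qx k 1 = 0 ∧ qx k 0 * qx k 3 - qx k 1 * qx k 1 = 0 := by
  refine ⟨?_, ?_, ?_, ?_, ?_, ?_⟩
  · simpa [Delta, qx] using delta_rel k 0
  · simpa [Delta, qx] using delta_rel k 1
  · simpa [Delta, qx] using delta_rel k 2
  · simpa [Delta, qx] using delta_rel k 3
  · simpa [Delta, qx] using delta_rel k 4
  · simpa [Delta, qx] using delta_rel k 5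

lemma par (a : ℕ) : ∃ n, a = 2 * n ∨ a = 2 * n + 1 := ⟨a / 2, by omega⟩

lemma ev_div (n : ℕ) : (2 * n) / 2 = n := by omega
lemma od_div (n : ℕ) : (2 * n + 1) / 2 = n := by omega
lemma ev_mod (n : ℕ) : (2 * n) % 2 = 0 := by omega
lemma od_mod (n : ℕ) : (2 * n + 1) % 2 = 1 := by omega
lemma ev2_div (n : ℕ) : (2 * n + 2) / 2 = n + 1 := by omega
lemma od2_div (n : ℕ) : (2 * n + 1 + 2) / 2 = n + 1 := by omega
lemma ev2_mod (n : ℕ) : (2 * n + 2) % 2 = 0 := by omega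
lemma od2_mod (n : ℕ) : (2 * n + 1 + 2) % 2 = 1 := by omega
lemma od1_div (n : ℕ) : (2 * n + 1 + 1) / 2 = n + 1 := by omega
lemma od1_mod (n : ℕ) : (2 * n + 1 + 1) % 2 = 0 := by omega

lemma nf_step (k : Type*) [Field k] (a b c : ℕ) :
    nf k (a + 2) b c = qx k 0 * nf k a b c ∧ nf k (a + 1) (b + 1) c = qx k 1 * nf k a b c ∧
    nf k (a + 1) b (c + 1) = qx k 2 * nf k a b c ∧ nf k a (b + 2) c = qx k 3 * nf k a b c ∧
    nf k a (b + 1) (c + 1) = qx k 4 * nf k a b c ∧ nf k a b (c + 2) = qx k 5 * nf k a b c := by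
  obtain ⟨h0, h1, h2, h3, h4, h5⟩ := rels k
  obtain ⟨a, rfl | rfl⟩ := par a <;> obtain ⟨b, rfl | rfl⟩ := par b <;>
  obtain ⟨c, rfl | rfl⟩ := par c <;>
  simp only [nf, ev_div, od_div, ev_mod, od_mod, ev2_div, od2_div, ev2_mod, od2_mod, od1_div,
    od1_mod, if_true, one_ne_zero, if_false, pow_succ, mul_zero, true_and, and_true, mul_one] <;>
  generalize qx k 0 ^ a = A <;> generalize qx k 3 ^ b = B <;> generalize qx k 5 ^ c = C <;>
  refine ⟨?_, ?_, ?_, ?_, ?_, ?_⟩ <;>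
  first
  | ring1
  | linear_combination A * B * C * h0
  | linear_combination A * B * C * h1
  | linear_combination A * B * C * h2
  | linear_combination A * B * C * h3
  | linear_combination A * B * C * h4
  | linear_combination A * B * C * h5
  | linear_combination - A * B * C * h0
  | linear_combination - A * B * C * h1
  | linear_combination - A * B * C * h2
  | linear_combination - A * B * C * h3
  | linear_combination - A * B * C * h4
  | linear_combination - A * B * C * h5

/-- The section of `theta` modulo the minors. -/
noncomputable def sec (k : Type*) [Field k] :
    MvPolynomial (Fin 3) k →ₗ[k] MvPolynomial (Fin 6) k ⧸ DI k :=
  (basisMonomials (Fin 3) k).constr k (fun e => nf k (e 0) (e 1) (e 2))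

lemma sec_mon (k : Type*) [Field k] (e : Fin 3 →₀ ℕ) :
    sec k (monomial e 1) = nf k (e 0) (e 1) (e 2) := by
  have := (basisMonomials (Fin 3) k).constr_basis k (fun e => nf k (e 0) (e 1) (e 2)) e
  simpa [sec] using this

lemma sec_one (k : Type*) [Field k] : sec k 1 = 1 := by
  have := sec_mon k 0
  simpa [nf] using this

lemma sec_XX (k : Type*) [Field k] (i j : Fin 3) (e : Fin 3 →₀ ℕ) :
    sec k (X i * X j * monomial e 1) =
      nf k ((if i = 0 then 1 else 0) + (if j = 0 then 1 else 0) + e 0)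
        ((if i = 1 then 1 else 0) + (if j = 1 then 1 else 0) + e 1)
        ((if i = 2 then 1 else 0) + (if j = 2 then 1 else 0) + e 2) := by
  have h : (X i * X j * monomial e 1 : MvPolynomial (Fin 3) k) =
      monomial (Finsupp.single i 1 + Finsupp.single j 1 + e) 1 := by
    rw [X, X, monomial_mul, monomial_mul, one_mul, one_mul]
  rw [h, sec_mon]
  simp only [Finsupp.add_apply, Finsupp.single_apply]

lemma sec_X (k : Type*) [Field k] (i : Fin 6) (h : MvPolynomial (Fin 3) k) :
    sec k (theta k (X i) * h) = qx k i * sec k h := by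
  induction h using MvPolynomial.induction_on' with
  | add p q hp hq => rw [mul_add, map_add, map_add, mul_add, hp, hq]
  | monomial e r =>
    have hr : monomial e r = r • (monomial e (1 : k)) := by simp [smul_monomial]
    rw [hr, mul_smul_comm, map_smul, map_smul, mul_smul_comm]
    congr 1
    obtain ⟨h0, h1, h2, h3, h4, h5⟩ := nf_step k (e 0) (e 1) (e 2)
    rw [sec_mon]
    fin_cases i
    · change sec k (theta k (X 0) * _) = qx k 0 * _
      have ht : theta k (X 0) = X 0 * X 0 := by simp [theta]
      rw [← h0, ht, sec_XX]; simp <;> congr 1 <;> omega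
    · change sec k (theta k (X 1) * _) = qx k 1 * _
      have ht : theta k (X 1) = X 0 * X 1 := by simp [theta]
      rw [← h1, ht, sec_XX]; simp <;> congr 1 <;> omega
    · change sec k (theta k (X 2) * _) = qx k 2 * _
      have ht : theta k (X 2) = X 0 * X 2 := by simp [theta]
      rw [← h2, ht, sec_XX]; simp <;> congr 1 <;> omega
    · change sec k (theta k (X 3) * _) = qx k 3 * _
      have ht : theta k (X 3) = X 1 * X 1 := by simp [theta]
      rw [← h3, ht, sec_XX]; simp <;> congr 1 <;> omega
    · change sec k (theta k (X 4) * _) = qx k 4 * _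
      have ht : theta k (X 4) = X 1 * X 2 := by simp [theta]
      rw [← h4, ht, sec_XX]; simp <;> congr 1 <;> omega
    · change sec k (theta k (X 5) * _) = qx k 5 * _
      have ht : theta k (X 5) = X 2 * X 2 := by simp [theta]
      rw [← h5, ht, sec_XX]; simp <;> congr 1 <;> omega

lemma sec_mul (k : Type*) [Field k] (G : MvPolynomial (Fin 6) k) (h : MvPolynomial (Fin 3) k) :
    sec k (theta k G * h) = Ideal.Quotient.mk (DI k) G * sec k h := by
  induction G using MvPolynomial.induction_on generalizing h with
  | C a =>
    have h1 : theta k (C a) * h = a • h := by simp [theta, smul_eq_C_mul]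
    rw [h1, map_smul]
    exact Algebra.smul_def a (sec k h)
  | add p q hp hq => rw [map_add, add_mul, map_add, hp, hq, map_add, add_mul]
  | mul_X p i hp => rw [map_mul (theta k), mul_assoc, hp, sec_X, map_mul, mul_assoc]; rfl

lemma theta_delta (k : Type*) [Field k] (i : Fin 6) : theta k (Delta k i) = 0 := by
  fin_cases i <;> simp [theta, Delta] <;> ring

lemma delta_hom (k : Type*) [Field k] (i : Fin 6) : (Delta k i).IsHomogeneous 2 := by
  fin_cases i <;> simp only [Delta] <;>
  exact ((isHomogeneous_X k _).mul (isHomogeneous_X k _)).sub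
    ((isHomogeneous_X k _).mul (isHomogeneous_X k _))

/-- For an irreducible plane curve `C = Z(f)` of even degree `2m`, the homogeneous ideal of
its Veronese image (the ideal generated by the homogeneous `G` with `θ(G) ∈ (f)`) is generated
by the six minors `Δᵢⱼ` together with a single form `F` of degree `m` with `θ(F) = f`. -/
theorem ideal_of_even_degree_curve (k : Type*) [Field k] [IsAlgClosed k]
    (f : MvPolynomial (Fin 3) k) (m : ℕ) (hm : 1 ≤ m) (hfirr : Irreducible f)
    (hf : f.IsHomogeneous (2 * m))
    (F : MvPolynomial (Fin 6) k) (hF : F.IsHomogeneous m) (hθF : theta k F = f) :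
    Ideal.span {G : MvPolynomial (Fin 6) k |
        (∃ n, G.IsHomogeneous n) ∧ theta k G ∈ Ideal.span {f}} =
      Ideal.span (insert F (Set.range (Delta k))) := by
  apply le_antisymm
  · rw [Ideal.span_le]
    rintro G ⟨-, hG⟩
    obtain ⟨h, hh⟩ := Ideal.mem_span_singleton'.1 hG
    obtain ⟨H, hH⟩ := Ideal.Quotient.mk_surjective (sec k h)
    have h1 := sec_mul k G 1
    rw [sec_one, mul_one, mul_one, ← hh, ← hθF, mul_comm, sec_mul, ← hH, ← map_mul] at h1
    have h2 := Ideal.Quotient.eq.1 h1.symm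
    have h3 : G - F * H ∈ Ideal.span (insert F (Set.range (Delta k))) :=
      Ideal.span_mono (Set.subset_insert _ _) h2
    have h4 : F * H ∈ Ideal.span (insert F (Set.range (Delta k))) :=
      Ideal.mul_mem_right _ _ (Ideal.subset_span (Set.mem_insert _ _))
    have h5 := add_mem h3 h4
    rwa [sub_add_cancel] at h5
  · apply Ideal.span_mono
    rintro G (rfl | ⟨i, rfl⟩)
    · exact ⟨⟨m, hF⟩, hθF ▸ Ideal.mem_span_singleton_self _⟩
    · exact ⟨⟨2, delta_hom k i⟩, by rw [theta_delta]; exact zero_mem _⟩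
end
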